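/- arXiv:math/0406353 — 2 statements merged into one kernel-verified Lean document; each statement's English description precedes it below -/
import Mathlib

section
/- There exist universal constants c, C > 0 with the following property. Let G = (V,E) be a finite connected d-regular simple graph with d ≥ 3 whose girth is at least g (g a positive integer), and let α be a real number with 1 ≤ α < √g/6. Then every subset B ⊆ V such that (B, d_G) admits an α-embedding into ℓ₂ satisfies |B| ≤ C·(d−1)^(−c·g/α²)·|V|. -/
namespace GirthRamsey

open SimpleGraph Finset

theorem two_paths {V : Type} [DecidableEq V] (G : SimpleGraph V) {a b : V} (p q : G.Walk a b)
    (hp : p.IsPath) (hq : q.IsPath) (hne : p ≠ q) : G.girth ≤ p.length + q.length := by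
  classical
  let s : Set (Sym2 V) := {e | e ∈ p.edges ∨ e ∈ q.edges}
  let H : SimpleGraph V := SimpleGraph.fromEdgeSet s
  have hHG : H ≤ G := by
    intro x y hxy
    rw [SimpleGraph.fromEdgeSet_adj] at hxy
    rcases hxy.1 with h | h
    · exact p.adj_of_mem_edges h
    · exact q.adj_of_mem_edges h
  have hpe : ∀ e ∈ p.edges, e ∈ H.edgeSet := by
    intro e he
    rw [SimpleGraph.edgeSet_fromEdgeSet]
    exact ⟨Or.inl he, G.not_isDiag_of_mem_edgeSet (p.edges_subset_edgeSet he)⟩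
  have hqe : ∀ e ∈ q.edges, e ∈ H.edgeSet := by
    intro e he
    rw [SimpleGraph.edgeSet_fromEdgeSet]
    exact ⟨Or.inr he, G.not_isDiag_of_mem_edgeSet (q.edges_subset_edgeSet he)⟩
  have hac : ¬ H.IsAcyclic := by
    intro hA
    have h1 := (hA.subsingleton_path a b).elim ⟨p.transfer H hpe, hp.transfer hpe⟩
      ⟨q.transfer H hqe, hq.transfer hqe⟩
    have h2 : p.transfer H hpe = q.transfer H hqe := congrArg Subtype.val h1
    apply hne
    apply SimpleGraph.Walk.ext_support
    rw [← p.support_transfer hpe, ← q.support_transfer hqe, h2]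
  obtain ⟨x, c, hc, -⟩ := SimpleGraph.exists_girth_eq_length.mpr hac
  have h3 := SimpleGraph.girth_le_length (hc.mapLe hHG)
  have h4 : c.edges.length ≤ (p.edges ++ q.edges).length := by
    apply List.Subperm.length_le
    apply List.Nodup.subperm hc.isTrail.edges_nodup
    intro e he
    have := c.edges_subset_edgeSet he
    rw [SimpleGraph.edgeSet_fromEdgeSet] at this
    exact List.mem_append.mpr this.1
  simp only [SimpleGraph.Walk.length_edges, List.length_append] at h4
  have h5 : (c.mapLe hHG).length = c.length := by simp [SimpleGraph.Walk.mapLe]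
  omega

theorem dist_adj {V : Type} {G : SimpleGraph V} (hc : G.Connected) {x y : V} (h : G.Adj x y) (o : V) :
    G.dist o x ≤ G.dist o y + 1 ∧ G.dist o y ≤ G.dist o x + 1 := by
  have h1 := hc.dist_triangle (u := o) (v := x) (w := y)
  have h2 := hc.dist_triangle (u := o) (v := y) (w := x)
  have h3 := SimpleGraph.dist_eq_one_iff_adj.mpr h
  have h4 := SimpleGraph.dist_eq_one_iff_adj.mpr h.symm
  omega

/-- parent uniqueness -/
theorem parent_unique {V : Type} [DecidableEq V] {G : SimpleGraph V} (hc : G.Connected)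
    {o z y y' : V} (hg : 2 * G.dist o z + 1 < G.girth) (hy : G.Adj z y) (hy' : G.Adj z y')
    (h : G.dist o y + 1 = G.dist o z) (h' : G.dist o y' ≤ G.dist o z) : y' = y := by
  obtain ⟨p, hp, hpl⟩ := hc.exists_path_of_dist o y
  obtain ⟨q, hq, hql⟩ := hc.exists_path_of_dist o y'
  by_contra hne
  have hP : (p.concat hy.symm).IsPath := by
    apply SimpleGraph.Walk.isPath_of_length_eq_dist
    simp; omega
  have hQ : (q.concat hy'.symm).IsPath := by
    rw [SimpleGraph.Walk.concat_isPath_iff]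
    refine ⟨hq, fun hz => ?_⟩
    have h1 := SimpleGraph.dist_le (q.takeUntil z hz)
    have h2 := congrArg SimpleGraph.Walk.length (q.take_spec hz)
    rw [SimpleGraph.Walk.length_append] at h2
    have h3 := SimpleGraph.dist_le (q.dropUntil z hz)
    have h4 := SimpleGraph.dist_eq_one_iff_adj.mpr hy'
    omega
  have := two_paths G _ _ hP hQ (by
    intro he
    have := congrArg SimpleGraph.Walk.penultimate he
    simp at this
    exact hne this.symm)
  simp at this
  omega

theorem exists_next {V : Type} {G : SimpleGraph V} (hc : G.Connected) {y x : V} {n : ℕ}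
    (h : G.dist y x = n + 1) : ∃ z, G.Adj y z ∧ G.dist z x = n := by
  obtain ⟨p, hp⟩ := hc.exists_walk_length_eq_dist y x
  cases p with
  | nil => simp at h
  | @cons _ z _ hyz r =>
    refine ⟨z, hyz, ?_⟩
    have h1 := SimpleGraph.dist_le r
    have h2 := dist_adj hc hyz x
    rw [SimpleGraph.dist_comm, SimpleGraph.dist_comm (u := x) (v := z)] at h2
    simp at hp
    omega

theorem exists_mid {V : Type} {G : SimpleGraph V} (hc : G.Connected) (j : ℕ) : ∀ {y x : V} {n : ℕ},
    G.dist y x = n + j → ∃ z, G.dist y z = j ∧ G.dist z x = n := by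
  induction j with
  | zero => intro y x n h; exact ⟨y, by simp, by simpa using h⟩
  | succ j ih =>
    intro y x n h
    obtain ⟨z, hz, hzx⟩ := exists_next hc (n := n + j) (by omega)
    obtain ⟨w, hw, hwx⟩ := ih hzx
    refine ⟨w, ?_, hwx⟩
    have h2 := dist_adj hc hz w
    rw [SimpleGraph.dist_comm, SimpleGraph.dist_comm (u := w) (v := z)] at h2
    have h3 := hc.dist_triangle (u := y) (v := w) (w := x)
    omega

theorem going_up {V : Type} [DecidableEq V] {G : SimpleGraph V} (hc : G.Connected) (o x : V) (n : ℕ) :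
    ∀ {y z : V}, G.Adj y z → G.dist o z = G.dist o y + 1 → G.dist z x = n → G.dist y x = n + 1 →
      2 * (G.dist o y + G.dist y x) - 1 < G.girth → G.dist o x = G.dist o y + G.dist y x := by
  induction n with
  | zero =>
    intro y z hyz ho hz hy _
    have : z = x := hc.dist_eq_zero_iff.mp hz
    subst this
    omega
  | succ n ih =>
    intro y z hyz ho hz hy hg
    obtain ⟨z', hz', hzx⟩ := exists_next hc hz
    have h1 : G.dist o z' = G.dist o z + 1 := by
      by_contra hne
      have h2 := dist_adj hc hz' o
      have : z' = y := parent_unique hc (o := o) (z := z) (by omega) hyz.symm hz' (by omega) (by omega)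
      subst this
      omega
    have := ih hz' h1 hzx hz (by omega)
    omega

/-- step dichotomy -/
theorem dichotomy {V : Type} [DecidableEq V] {G : SimpleGraph V} (hc : G.Connected) {o u : V} {h j : ℕ}
    (hj : 1 ≤ j) (hjh : j ≤ h) (hg1 : 2 * (G.dist o u + h) ≤ G.girth) (hg2 : 6 * h ≤ G.girth) :
    ∃ p, ∀ x, G.dist u x = h → G.dist p x = h - j ∨ G.dist o u + h + 2 ≤ G.dist o x + 2 * j := by
  by_cases hD : G.dist o u < j
  · refine ⟨o, fun x hx => Or.inr ?_⟩
    have := hc.dist_triangle (u := u) (v := o) (w := x)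
    rw [SimpleGraph.dist_comm (u := u) (v := o)] at this
    omega
  · push Not at hD
    obtain ⟨p, hup, hpo⟩ := exists_mid hc (y := u) (x := o) (n := G.dist o u - j) j
      (by rw [SimpleGraph.dist_comm]; omega)
    obtain ⟨a, hpa, hau⟩ := exists_next hc (y := p) (x := u) (n := j - 1)
      (by rw [SimpleGraph.dist_comm]; omega)
    have hoa : G.dist o a = G.dist o p + 1 := by
      have h1 := dist_adj hc hpa o
      have h2 := hc.dist_triangle (u := o) (v := a) (w := u)
      rw [SimpleGraph.dist_comm (u := o) (v := p)] at *
      omega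
    refine ⟨p, fun x hx => ?_⟩
    have t1 := hc.dist_triangle (u := p) (v := u) (w := x)
    rw [SimpleGraph.dist_comm (u := p) (v := u)] at t1
    have t2 := hc.dist_triangle (u := u) (v := p) (w := x)
    rcases Nat.eq_zero_or_pos (G.dist p x) with h0 | h0
    · left; omega
    obtain ⟨w, hpw, hwx⟩ := exists_next hc (y := p) (x := x) (n := G.dist p x - 1) (by omega)
    by_cases hw : G.dist u w = G.dist u p + 1
    · left
      have := going_up hc u x _ hpw hw hwx (by omega) (by omega)
      omega
    · right
      have h1 := dist_adj hc hpw u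
      rw [SimpleGraph.dist_comm (u := a) (v := u)] at hau
      have : w = a := parent_unique hc (o := u) (z := p) (by omega) hpa hpw (by omega) (by omega)
      subst this
      rw [SimpleGraph.dist_comm (u := p) (v := o)] at hpo
      have h2 := going_up hc o x _ hpw hoa hwx (by omega) (by omega)
      have t3 := hc.dist_triangle (u := u) (v := w) (w := x)
      omega

/-- sphere -/
noncomputable def sph {V : Type} [Fintype V] (G : SimpleGraph V) (h : ℕ) (u : V) : Finset V :=
  Finset.univ.filter (fun x => G.dist u x = h)

theorem mem_sph {V : Type} [Fintype V] {G : SimpleGraph V} {h : ℕ} {u x : V} :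
    x ∈ sph G h u ↔ G.dist u x = h := by simp [sph]

theorem mem_sph_comm {V : Type} [Fintype V] {G : SimpleGraph V} {h : ℕ} {u x : V} :
    x ∈ sph G h u ↔ u ∈ sph G h x := by rw [mem_sph, mem_sph, SimpleGraph.dist_comm]

section
variable {V : Type} [Fintype V] [DecidableEq V] {G : SimpleGraph V} [DecidableRel G.Adj] {d : ℕ}

theorem sph_zero (hc : G.Connected) (u : V) : sph G 0 u = {u} := by
  ext x; rw [mem_sph, hc.dist_eq_zero_iff, Finset.mem_singleton, eq_comm]

theorem sph_one (u : V) : sph G 1 u = G.neighborFinset u := by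
  ext x; rw [mem_sph, SimpleGraph.dist_eq_one_iff_adj, SimpleGraph.mem_neighborFinset]

theorem sph_succ_le (hc : G.Connected) (hr : G.IsRegularOfDegree d) (k : ℕ) (u : V) :
    (sph G (k + 2) u).card ≤ (d - 1) * (sph G (k + 1) u).card := by
  have hsub : sph G (k + 2) u ⊆ (sph G (k + 1) u).biUnion
      (fun z => (G.neighborFinset z) \ (sph G k u)) := by
    intro x hx
    rw [mem_sph] at hx
    obtain ⟨z, hz, hzu⟩ := exists_next hc (y := x) (x := u) (n := k + 1)
      (by rw [SimpleGraph.dist_comm]; omega)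
    rw [Finset.mem_biUnion]
    refine ⟨z, by rw [mem_sph, SimpleGraph.dist_comm]; exact hzu, ?_⟩
    rw [Finset.mem_sdiff, SimpleGraph.mem_neighborFinset, mem_sph]
    exact ⟨hz.symm, by omega⟩
  refine (Finset.card_le_card hsub).trans (Finset.card_biUnion_le.trans ?_)
  rw [mul_comm, ← smul_eq_mul]
  apply Finset.sum_le_card_nsmul
  intro z hz
  rw [mem_sph, SimpleGraph.dist_comm] at hz
  obtain ⟨y, hy, hyu⟩ := exists_next hc hz
  have : (G.neighborFinset z) \ (sph G k u) ⊆ (G.neighborFinset z).erase y := by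
    intro t ht
    rw [Finset.mem_sdiff] at ht
    rw [Finset.mem_erase]
    refine ⟨?_, ht.1⟩
    rintro rfl
    exact ht.2 (by rw [mem_sph, SimpleGraph.dist_comm]; exact hyu)
  refine (Finset.card_le_card this).trans ?_
  rw [Finset.card_erase_of_mem (by simpa using hy), SimpleGraph.card_neighborFinset_eq_degree, hr z]

theorem sph_card_le (hc : G.Connected) (hr : G.IsRegularOfDegree d) (hd : 3 ≤ d) (k : ℕ) (u : V) :
    (sph G k u).card ≤ 2 * (d - 1) ^ k := by
  rcases k with _ | k
  · simp [sph_zero hc]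
  induction k with
  | zero => rw [sph_one, SimpleGraph.card_neighborFinset_eq_degree, hr u]; simp; omega
  | succ k ih =>
    refine (sph_succ_le hc hr k u).trans ?_
    calc (d - 1) * (sph G (k + 1) u).card ≤ (d - 1) * (2 * (d - 1) ^ (k + 1)) :=
          Nat.mul_le_mul_left _ ih
      _ = _ := by ring

theorem le_sph_succ (hc : G.Connected) (hr : G.IsRegularOfDegree d) (k : ℕ) (u : V)
    (hg : 2 * k + 3 < G.girth) :
    (d - 1) * (sph G k u).card ≤ (sph G (k + 1) u).card := by
  have h1 : (sph G k u).card * (d - 1) ≤ (sph G (k + 1) u).card * 1 := by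
    apply Finset.card_mul_le_card_mul (fun a b => G.Adj a b)
    · intro z hz
      rw [mem_sph] at hz
      rw [Finset.bipartiteAbove]
      have key : ∃ y, (G.neighborFinset z).erase y ⊆ (sph G (k + 1) u).filter (fun b => G.Adj z b) := by
        rcases k with _ | k
        · refine ⟨u, fun t ht => ?_⟩
          rw [hc.dist_eq_zero_iff] at hz
          subst hz
          rw [Finset.mem_erase, SimpleGraph.mem_neighborFinset] at ht
          rw [Finset.mem_filter, mem_sph, zero_add, SimpleGraph.dist_eq_one_iff_adj]
          exact ⟨ht.2, ht.2⟩
        · rw [SimpleGraph.dist_comm] at hz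
          obtain ⟨y, hy, hyu⟩ := exists_next hc hz
          rw [SimpleGraph.dist_comm] at hz hyu
          refine ⟨y, fun t ht => ?_⟩
          rw [Finset.mem_erase, SimpleGraph.mem_neighborFinset] at ht
          rw [Finset.mem_filter, mem_sph]
          refine ⟨?_, ht.2⟩
          by_contra hne
          have h2 := dist_adj hc ht.2 u
          exact ht.1 (parent_unique hc (o := u) (z := z) (by omega) hy ht.2 (by omega) (by omega))
      obtain ⟨y, hy⟩ := key
      refine le_trans ?_ (Finset.card_le_card hy)
      refine le_trans ?_ (Finset.pred_card_le_card_erase)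
      rw [SimpleGraph.card_neighborFinset_eq_degree, hr z]
    · intro z hz
      rw [mem_sph] at hz
      rw [Finset.card_le_one]
      intro a ha b hb
      rw [Finset.mem_bipartiteBelow, mem_sph] at ha hb
      exact parent_unique hc (o := u) (z := z) (by omega) hb.2.symm ha.2.symm (by omega) (by omega)
  rw [mul_comm]; omega

theorem le_sph_card (hc : G.Connected) (hr : G.IsRegularOfDegree d) (k : ℕ) (u : V)
    (hg : 2 * k + 1 < G.girth) : (d - 1) ^ k ≤ (sph G k u).card := by
  induction k with
  | zero => simp [sph_zero hc]
  | succ k ih =>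
    refine le_trans ?_ (le_sph_succ hc hr k u (by omega))
    rw [pow_succ, mul_comm]
    exact Nat.mul_le_mul_left _ (ih (by omega))

end
end GirthRamsey
namespace GirthRamsey

theorem var_ineq {ι : Type} [Fintype ι] {E : Type} [NormedAddCommGroup E] [InnerProductSpace ℝ E]
    (p : ι → ℝ) (hp1 : ∑ i, p i = 1) (a : ι → E) (b : E) :
    ∑ i, ∑ k, p i * p k * ‖a i - a k‖ ^ 2 ≤ 2 * ∑ i, p i * ‖b - a i‖ ^ 2 := by
  have h1 : ∀ i k, p i * p k * ‖a i - a k‖ ^ 2 = p k * (p i * ‖b - a i‖ ^ 2)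
      + p i * (p k * ‖b - a k‖ ^ 2) - 2 * inner ℝ (p i • (b - a i)) (p k • (b - a k)) := by
    intro i k
    have : a i - a k = (b - a k) - (b - a i) := by abel
    rw [this, norm_sub_sq_real, inner_smul_left, inner_smul_right, real_inner_comm]
    simp
    ring
  have h2 : ∑ i, ∑ k, p i * p k * ‖a i - a k‖ ^ 2 = 2 * ∑ i, p i * ‖b - a i‖ ^ 2
      - 2 * inner ℝ (∑ i, p i • (b - a i)) (∑ i, p i • (b - a i)) := by
    simp_rw [h1, Finset.sum_sub_distrib, Finset.sum_add_distrib, ← Finset.mul_sum,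
      ← Finset.sum_mul, hp1, sum_inner, inner_sum]
    ring
  rw [h2, real_inner_self_eq_norm_sq]
  nlinarith [sq_nonneg ‖∑ i, p i • (b - a i)‖]

section
variable {ι : Type} [Fintype ι] [DecidableEq ι] {E : Type} [NormedAddCommGroup E]
  [InnerProductSpace ℝ E]

theorem double_step (P : Matrix ι ι ℝ) (w : ι → ℝ) (hw : ∀ i, 0 ≤ w i)
    (h1 : ∀ i, ∑ j, P i j = 1) (hb : ∀ i j, w i * P i j = w j * P j i) (f : ι → E) :
    ∑ i, ∑ j, w i * (P * P) i j * ‖f i - f j‖ ^ 2 ≤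
      2 * ∑ i, ∑ j, w i * P i j * ‖f i - f j‖ ^ 2 := by
  have e1 : ∑ i, ∑ j, w i * (P * P) i j * ‖f i - f j‖ ^ 2 =
      ∑ k, w k * ∑ i, ∑ j, P k i * P k j * ‖f i - f j‖ ^ 2 := by
    simp_rw [Matrix.mul_apply, Finset.mul_sum, Finset.sum_mul]
    have : ∀ i j k, w i * (P i k * P k j) * ‖f i - f j‖ ^ 2 =
        w k * (P k i * P k j * ‖f i - f j‖ ^ 2) := by
      intro i j k
      calc _ = (w i * P i k) * P k j * ‖f i - f j‖ ^ 2 := by ring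
        _ = _ := by rw [hb]; ring
    simp_rw [this]
    calc _ = ∑ i, ∑ k, ∑ j, w k * (P k i * P k j * ‖f i - f j‖ ^ 2) :=
          Finset.sum_congr rfl fun i _ => Finset.sum_comm
      _ = _ := Finset.sum_comm
  rw [e1, Finset.mul_sum]
  apply Finset.sum_le_sum
  intro k _
  have := mul_le_mul_of_nonneg_left (var_ineq (P k) (h1 k) f (f k)) (hw k)
  refine this.trans (le_of_eq ?_)
  simp_rw [mul_assoc, ← Finset.mul_sum]
  ring

theorem pow_props (P : Matrix ι ι ℝ) (w : ι → ℝ) (h0 : ∀ i j, 0 ≤ P i j)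
    (h1 : ∀ i, ∑ j, P i j = 1) (hb : ∀ i j, w i * P i j = w j * P j i) (k : ℕ) :
    (∀ i j, 0 ≤ (P ^ k) i j) ∧ (∀ i, ∑ j, (P ^ k) i j = 1) ∧
      (∀ i j, w i * (P ^ k) i j = w j * (P ^ k) j i) := by
  induction k with
  | zero =>
    refine ⟨fun i j => ?_, fun i => ?_, fun i j => ?_⟩
    · simp [Matrix.one_apply]; split_ifs <;> norm_num
    · simp [Matrix.one_apply]
    · by_cases h : i = j
      · subst h; rfl
      · simp [Matrix.one_apply, h, Ne.symm h]
  | succ k ih =>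
    obtain ⟨a, b, c⟩ := ih
    refine ⟨fun i j => ?_, fun i => ?_, fun i j => ?_⟩
    · rw [pow_succ, Matrix.mul_apply]
      exact Finset.sum_nonneg fun x _ => mul_nonneg (a _ _) (h0 _ _)
    · simp_rw [pow_succ, Matrix.mul_apply]
      rw [Finset.sum_comm]
      simp_rw [← Finset.mul_sum, h1, mul_one, b]
    · rw [pow_succ, Matrix.mul_apply, ← pow_succ, pow_succ', Matrix.mul_apply, Finset.mul_sum,
        Finset.mul_sum]
      refine Finset.sum_congr rfl fun x _ => ?_
      calc w i * ((P ^ k) i x * P x j) = (w i * (P ^ k) i x) * P x j := by ring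
        _ = (w x * P x j) * (P ^ k) x i := by rw [c]; ring
        _ = _ := by rw [hb]; ring

theorem markov_type (P : Matrix ι ι ℝ) (w : ι → ℝ) (hw : ∀ i, 0 ≤ w i) (h0 : ∀ i j, 0 ≤ P i j)
    (h1 : ∀ i, ∑ j, P i j = 1) (hb : ∀ i j, w i * P i j = w j * P j i) (f : ι → E) (m : ℕ) :
    ∑ i, ∑ j, w i * (P ^ (2 ^ m)) i j * ‖f i - f j‖ ^ 2 ≤
      2 ^ m * ∑ i, ∑ j, w i * P i j * ‖f i - f j‖ ^ 2 := by
  induction m with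
  | zero => simp
  | succ m ih =>
    obtain ⟨-, b, c⟩ := pow_props P w h0 h1 hb (2 ^ m)
    have := double_step _ w hw b c f
    rw [← pow_add, ← two_mul, ← pow_succ'] at this
    refine this.trans ?_
    rw [pow_succ']
    linarith

theorem chain_bound [Nonempty ι] (P : Matrix ι ι ℝ) (w : ι → ℝ) (hw : ∀ i, 0 < w i)
    (h0 : ∀ i j, 0 ≤ P i j)
    (h1 : ∀ i, ∑ j, P i j = 1) (hb : ∀ i j, w i * P i j = w j * P j i) (f : ι → E) (m : ℕ)
    (D : ι → ι → ℝ) (h R : ℝ) (hh : 0 ≤ h) (hDo : ∀ o, D o o = 0) (hD0 : ∀ o i, 0 ≤ D o i)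
    (hDf : ∀ o i, D o i ≤ ‖f o - f i‖) (hR : ∀ i j, P i j ≠ 0 → ‖f i - f j‖ ≤ R)
    (hdr : ∀ (o : ι) (k : ℕ), k < 2 ^ m → ∀ i, (P ^ k) o i ≠ 0 → D o i + h ≤ ∑ j, P i j * D o j) :
    (2 ^ m * h) ^ 2 ≤ 2 ^ m * R ^ 2 := by
  have hpp := pow_props P w h0 h1 hb
  have drift : ∀ (o : ι) (k : ℕ), k ≤ 2 ^ m → (k : ℝ) * h ≤ ∑ j, (P ^ k) o j * D o j := by
    intro o k
    induction k with
    | zero => intro _; simp [Matrix.one_apply, hDo]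
    | succ k ih =>
      intro hk
      have ih' := ih (by omega)
      have : ∑ j, (P ^ (k + 1)) o j * D o j = ∑ i, (P ^ k) o i * ∑ j, P i j * D o j := by
        simp_rw [pow_succ, Matrix.mul_apply, Finset.sum_mul, Finset.mul_sum]
        rw [Finset.sum_comm]
        simp_rw [mul_assoc]
      rw [this]
      have h2 : ∑ i, (P ^ k) o i * (D o i + h) ≤ ∑ i, (P ^ k) o i * ∑ j, P i j * D o j := by
        apply Finset.sum_le_sum
        intro i _
        by_cases hz : (P ^ k) o i = 0
        · simp [hz]
        · exact mul_le_mul_of_nonneg_left (hdr o k (by omega) i hz) ((hpp k).1 _ _)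
      refine le_trans ?_ h2
      simp_rw [mul_add, Finset.sum_add_distrib, ← Finset.sum_mul, (hpp k).2.1]
      push_cast
      linarith
  have low : ∀ o, (2 ^ m * h) ^ 2 ≤ ∑ j, (P ^ (2 ^ m)) o j * ‖f o - f j‖ ^ 2 := by
    intro o
    have a1 := drift o (2 ^ m) le_rfl
    push_cast at a1
    set t : ℝ := 2 ^ m * h
    have ht : 0 ≤ t := by positivity
    have a2 : ∑ j, (P ^ (2 ^ m)) o j * (2 * t * D o j - t ^ 2) ≤
        ∑ j, (P ^ (2 ^ m)) o j * ‖f o - f j‖ ^ 2 := by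
      apply Finset.sum_le_sum
      intro j _
      apply mul_le_mul_of_nonneg_left _ ((hpp _).1 _ _)
      have := hDf o j
      have := hD0 o j
      nlinarith [sq_nonneg (D o j - t)]
    refine le_trans ?_ a2
    simp_rw [mul_sub, Finset.sum_sub_distrib, ← Finset.sum_mul, (hpp _).2.1]
    have : ∑ x, (P ^ 2 ^ m) o x * (2 * t * D o x) = 2 * t * ∑ x, (P ^ 2 ^ m) o x * D o x := by
      rw [Finset.mul_sum]; exact Finset.sum_congr rfl fun _ _ => by ring
    rw [this]
    nlinarith
  have mt := markov_type P w (fun i => (hw i).le) h0 h1 hb f m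
  have up : ∑ i, ∑ j, w i * P i j * ‖f i - f j‖ ^ 2 ≤ ∑ i, w i * R ^ 2 := by
    apply Finset.sum_le_sum
    intro i _
    have : ∑ j, w i * P i j * ‖f i - f j‖ ^ 2 ≤ ∑ j, w i * P i j * R ^ 2 := by
      apply Finset.sum_le_sum
      intro j _
      by_cases hz : P i j = 0
      · simp [hz]
      · apply mul_le_mul_of_nonneg_left _ (mul_nonneg (hw i).le (h0 _ _))
        have := hR i j hz
        gcongr
    refine this.trans (le_of_eq ?_)
    rw [← Finset.sum_mul, ← Finset.mul_sum, h1, mul_one]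
  have lo : ∑ i, w i * (2 ^ m * h) ^ 2 ≤ ∑ i, ∑ j, w i * (P ^ (2 ^ m)) i j * ‖f i - f j‖ ^ 2 := by
    apply Finset.sum_le_sum
    intro i _
    simp_rw [mul_assoc (w i), ← Finset.mul_sum]
    exact mul_le_mul_of_nonneg_left (low i) (hw i).le
  have hpos : 0 < ∑ i, w i := Finset.sum_pos (fun i _ => hw i) Finset.univ_nonempty
  have fin : (∑ i, w i) * (2 ^ m * h) ^ 2 ≤ (∑ i, w i) * (2 ^ m * R ^ 2) := by
    rw [Finset.sum_mul]
    refine lo.trans (mt.trans ?_)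
    calc _ ≤ (2 : ℝ) ^ m * ∑ i, w i * R ^ 2 := by gcongr
      _ = _ := by rw [← Finset.sum_mul]; ring
  exact le_of_mul_le_mul_left fin hpos

end

theorem min_degree {V : Type} [DecidableEq V] (w : V → V → ℝ) (hs : ∀ u v, w u v = w v u)
    (h0 : ∀ u v, 0 ≤ w u v) (M : ℝ) (B : Finset V) :
    2 * M * B.card < ∑ u ∈ B, ∑ v ∈ B, w u v →
    ∃ S ⊆ B, S.Nonempty ∧ ∀ u ∈ S, M ≤ ∑ v ∈ S, w u v := by
  induction B using Finset.strongInduction with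
  | H B ih =>
    intro hB
    by_cases hex : ∀ u ∈ B, M ≤ ∑ v ∈ B, w u v
    · refine ⟨B, subset_rfl, ?_, hex⟩
      by_contra hne
      rw [Finset.not_nonempty_iff_eq_empty] at hne
      subst hne
      simp at hB
    · push Not at hex
      obtain ⟨u, hu, hlt⟩ := hex
      obtain ⟨S, hS, hn, h⟩ := ih (B.erase u) (Finset.erase_ssubset hu) (by
        have e1 : ∀ x, ∑ v ∈ B, w x v = w x u + ∑ v ∈ B.erase u, w x v := fun x =>
          (Finset.add_sum_erase B (fun v => w x v) hu).symm
        have e2 : ∑ x ∈ B, ∑ v ∈ B, w x v = ∑ v ∈ B, w u v + ∑ x ∈ B.erase u, ∑ v ∈ B, w x v :=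
          (Finset.add_sum_erase B (fun x => ∑ v ∈ B, w x v) hu).symm
        have e3 : ∑ x ∈ B.erase u, ∑ v ∈ B, w x v =
            ∑ x ∈ B.erase u, w u x + ∑ x ∈ B.erase u, ∑ v ∈ B.erase u, w x v := by
          rw [← Finset.sum_add_distrib]
          refine Finset.sum_congr rfl fun x _ => ?_
          rw [e1 x, hs x u]
        have e4 := e1 u
        have e5 : ((B.erase u).card : ℝ) = B.card - 1 := by
          rw [Finset.card_erase_of_mem hu, Nat.cast_sub (Finset.card_pos.mpr ⟨u, hu⟩)]; simp
        rw [e5]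
        have := h0 u u
        nlinarith)
      exact ⟨S, hS.trans (Finset.erase_subset _ _), hn, h⟩

end GirthRamsey
namespace GirthRamsey

noncomputable def sA {V : Type} (G : SimpleGraph V) (h : ℕ) (u x : V) : ℝ :=
  if G.dist u x = h then 1 else 0

noncomputable def kern {V : Type} [Fintype V] (G : SimpleGraph V) (h : ℕ) (u v : V) : ℝ :=
  ∑ x, sA G h u x * sA G h x v

theorem sA_nonneg {V : Type} (G : SimpleGraph V) (h : ℕ) (u x : V) : 0 ≤ sA G h u x := by
  unfold sA; split_ifs <;> norm_num

theorem sA_le_one {V : Type} (G : SimpleGraph V) (h : ℕ) (u x : V) : sA G h u x ≤ 1 := by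
  unfold sA; split_ifs <;> norm_num

theorem sA_comm {V : Type} (G : SimpleGraph V) (h : ℕ) (u x : V) : sA G h u x = sA G h x u := by
  unfold sA; rw [SimpleGraph.dist_comm]

theorem sA_sum {V : Type} [Fintype V] (G : SimpleGraph V) (h : ℕ) (u : V) :
    ∑ x, sA G h u x = ((sph G h u).card : ℝ) := by
  unfold sA sph; simp

theorem kern_nonneg {V : Type} [Fintype V] (G : SimpleGraph V) (h : ℕ) (u v : V) :
    0 ≤ kern G h u v := Finset.sum_nonneg fun _ _ => mul_nonneg (sA_nonneg _ _ _ _) (sA_nonneg _ _ _ _)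

theorem kern_comm {V : Type} [Fintype V] (G : SimpleGraph V) (h : ℕ) (u v : V) :
    kern G h u v = kern G h v u := by
  unfold kern
  refine Finset.sum_congr rfl fun x _ => ?_
  rw [sA_comm G h u x, sA_comm G h x v, mul_comm]

theorem kern_supp {V : Type} [Fintype V] {G : SimpleGraph V} (hc : G.Connected) {h : ℕ} {u v : V}
    (hk : kern G h u v ≠ 0) : G.dist u v ≤ 2 * h := by
  obtain ⟨x, -, hx⟩ := Finset.exists_ne_zero_of_sum_ne_zero hk
  have h1 : G.dist u x = h := by
    by_contra hn; exact hx (by simp [sA, hn])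
  have h2 : G.dist x v = h := by
    by_contra hn; exact hx (by simp [sA, hn])
  have := hc.dist_triangle (u := u) (v := x) (w := v)
  omega

section
variable {V : Type} [Fintype V] [DecidableEq V] {G : SimpleGraph V} [DecidableRel G.Adj] {d : ℕ}

theorem step_drift (hc : G.Connected) (hr : G.IsRegularOfDegree d) (hd : 3 ≤ d) {h j : ℕ}
    (hj : 1 ≤ j) (hjh : j ≤ h) (hj8 : 8 * (j - 1) ≤ h) (o u : V)
    (hg1 : 2 * (G.dist o u + 2 * h) ≤ G.girth) (hg2 : 6 * h ≤ G.girth) (S : Finset V)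
    (hW : 64 * (((d - 1 : ℕ) : ℝ)) ^ (2 * h - j) ≤ ∑ v ∈ S, kern G h u v) :
    ((G.dist o u : ℝ) + h) * ∑ v ∈ S, kern G h u v ≤ ∑ v ∈ S, kern G h u v * (G.dist o v : ℝ) := by
  have hex : ∀ y, ∃ p, 2 * (G.dist o y + h) ≤ G.girth → ∀ x, G.dist y x = h →
      G.dist p x = h - j ∨ G.dist o y + h + 2 ≤ G.dist o x + 2 * j := by
    intro y
    by_cases hy : 2 * (G.dist o y + h) ≤ G.girth
    · obtain ⟨p, hp⟩ := dichotomy hc (o := o) (u := y) hj hjh hy hg2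
      exact ⟨p, fun _ => hp⟩
    · exact ⟨o, fun h => absurd h hy⟩
  choose p hp using hex
  set b : V → V → ℝ := fun y x => sA G (h - j) (p y) x with hb
  have b0 : ∀ y x, 0 ≤ b y x := fun y x => sA_nonneg _ _ _ _
  have pt : ∀ x v, sA G h u x * sA G h x v * ((h : ℝ) / 2 - 7 * h / 2 * (b u x + b x v)) ≤
      sA G h u x * sA G h x v * ((G.dist o v : ℝ) - (G.dist o u + h)) := by
    intro x v
    by_cases hx : G.dist u x = h
    swap
    · simp [sA, hx]
    by_cases hv : G.dist x v = h
    swap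
    · simp [sA, hv]
    apply mul_le_mul_of_nonneg_left _ (mul_nonneg (sA_nonneg _ _ _ _) (sA_nonneg _ _ _ _))
    have t1 := hc.dist_triangle (u := o) (v := u) (w := x)
    have t2 := hc.dist_triangle (u := u) (v := x) (w := v)
    have t3 := hc.dist_triangle (u := o) (v := v) (w := u)
    rw [SimpleGraph.dist_comm (u := v) (v := u)] at t3
    have crude : (G.dist o u : ℝ) ≤ G.dist o v + 2 * h := by
      have : G.dist o u ≤ G.dist o v + 2 * h := by omega
      exact_mod_cast this
    have hh : (0 : ℝ) ≤ h := Nat.cast_nonneg _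
    rcases hp u (by omega) x hx with h1 | h1
    · have : b u x = 1 := by simp [hb, sA, h1]
      rw [this]
      nlinarith [b0 x v]
    · rcases hp x (by omega) v hv with h2 | h2
      · have : b x v = 1 := by simp [hb, sA, h2]
        rw [this]
        nlinarith [b0 u x]
      · have h3 : 2 * (G.dist o u) + 3 * h ≤ 2 * G.dist o v := by omega
        have h3' : (2 : ℝ) * (G.dist o u) + 3 * h ≤ 2 * G.dist o v := by exact_mod_cast h3
        nlinarith [mul_nonneg hh (b0 u x), mul_nonneg hh (b0 x v)]
  set q : ℝ := ((d - 1 : ℕ) : ℝ) with hq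
  have hq0 : 0 ≤ q := Nat.cast_nonneg _
  have sphle : ∀ k y, ((sph G k y).card : ℝ) ≤ 2 * q ^ k := by
    intro k y
    rw [hq]
    exact_mod_cast sph_card_le hc hr hd k y
  have hpow : q ^ (h - j) * q ^ h = q ^ (2 * h - j) := by
    rw [← pow_add]; congr 1; omega
  -- bad mass
  have bad1 : ∑ v ∈ S, ∑ x, sA G h u x * sA G h x v * b u x ≤ 4 * q ^ (2 * h - j) := by
    calc ∑ v ∈ S, ∑ x, sA G h u x * sA G h x v * b u x
        ≤ ∑ v, ∑ x, sA G h u x * sA G h x v * b u x :=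
          Finset.sum_le_sum_of_subset_of_nonneg (Finset.subset_univ _) fun v _ _ =>
            Finset.sum_nonneg fun x _ => mul_nonneg (mul_nonneg (sA_nonneg _ _ _ _)
              (sA_nonneg _ _ _ _)) (b0 _ _)
      _ ≤ ∑ v, ∑ x, b u x * sA G h x v := by
          refine Finset.sum_le_sum fun v _ => Finset.sum_le_sum fun x _ => ?_
          nlinarith [mul_nonneg (b0 u x) (sA_nonneg G h x v), sA_le_one G h u x]
      _ = ∑ x, b u x * ((sph G h x).card : ℝ) := by
          rw [Finset.sum_comm]; simp_rw [← Finset.mul_sum, sA_sum]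
      _ ≤ ∑ x, b u x * (2 * q ^ h) := Finset.sum_le_sum fun x _ =>
          mul_le_mul_of_nonneg_left (sphle _ _) (b0 _ _)
      _ = ((sph G (h - j) (p u)).card : ℝ) * (2 * q ^ h) := by
          rw [← Finset.sum_mul, hb, sA_sum]
      _ ≤ (2 * q ^ (h - j)) * (2 * q ^ h) := by
          apply mul_le_mul_of_nonneg_right (sphle _ _); positivity
      _ = 4 * q ^ (2 * h - j) := by rw [← hpow]; ring
  have bad2 : ∑ v ∈ S, ∑ x, sA G h u x * sA G h x v * b x v ≤ 4 * q ^ (2 * h - j) := by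
    calc ∑ v ∈ S, ∑ x, sA G h u x * sA G h x v * b x v
        ≤ ∑ v, ∑ x, sA G h u x * sA G h x v * b x v :=
          Finset.sum_le_sum_of_subset_of_nonneg (Finset.subset_univ _) fun v _ _ =>
            Finset.sum_nonneg fun x _ => mul_nonneg (mul_nonneg (sA_nonneg _ _ _ _)
              (sA_nonneg _ _ _ _)) (b0 _ _)
      _ ≤ ∑ v, ∑ x, sA G h u x * b x v := by
          refine Finset.sum_le_sum fun v _ => Finset.sum_le_sum fun x _ => ?_
          nlinarith [mul_nonneg (b0 x v) (sA_nonneg G h u x), sA_le_one G h x v]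
      _ = ∑ x, sA G h u x * ((sph G (h - j) (p x)).card : ℝ) := by
          rw [Finset.sum_comm]; simp_rw [← Finset.mul_sum, hb, sA_sum]
      _ ≤ ∑ x, sA G h u x * (2 * q ^ (h - j)) := Finset.sum_le_sum fun x _ =>
          mul_le_mul_of_nonneg_left (sphle _ _) (sA_nonneg _ _ _ _)
      _ = ((sph G h u).card : ℝ) * (2 * q ^ (h - j)) := by
          rw [← Finset.sum_mul, sA_sum]
      _ ≤ (2 * q ^ h) * (2 * q ^ (h - j)) := by
          apply mul_le_mul_of_nonneg_right (sphle _ _); positivity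
      _ = 4 * q ^ (2 * h - j) := by rw [← hpow]; ring
  have tot : ∑ v ∈ S, ∑ x, sA G h u x * sA G h x v * ((h : ℝ) / 2 - 7 * h / 2 * (b u x + b x v)) ≤
      ∑ v ∈ S, ∑ x, sA G h u x * sA G h x v * ((G.dist o v : ℝ) - (G.dist o u + h)) :=
    Finset.sum_le_sum fun v _ => Finset.sum_le_sum fun x _ => pt x v
  have eR : ∑ v ∈ S, ∑ x, sA G h u x * sA G h x v * ((G.dist o v : ℝ) - (G.dist o u + h)) =
      ∑ v ∈ S, kern G h u v * (G.dist o v : ℝ) - ((G.dist o u : ℝ) + h) * ∑ v ∈ S, kern G h u v := by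
    rw [Finset.mul_sum, ← Finset.sum_sub_distrib]
    refine Finset.sum_congr rfl fun v _ => ?_
    rw [← Finset.sum_mul, kern]; ring
  have eL : ∑ v ∈ S, ∑ x, sA G h u x * sA G h x v * ((h : ℝ) / 2 - 7 * h / 2 * (b u x + b x v)) =
      (h : ℝ) / 2 * ∑ v ∈ S, kern G h u v - 7 * h / 2 *
        (∑ v ∈ S, ∑ x, sA G h u x * sA G h x v * b u x +
          ∑ v ∈ S, ∑ x, sA G h u x * sA G h x v * b x v) := by
    rw [← Finset.sum_add_distrib, Finset.mul_sum, Finset.mul_sum, ← Finset.sum_sub_distrib]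
    refine Finset.sum_congr rfl fun v _ => ?_
    rw [kern, ← Finset.sum_add_distrib, Finset.mul_sum, Finset.mul_sum, ← Finset.sum_sub_distrib]
    refine Finset.sum_congr rfl fun x _ => ?_
    ring
  rw [eR, eL] at tot
  have hh : (0 : ℝ) ≤ h := Nat.cast_nonneg _
  have hqp : 0 ≤ q ^ (2 * h - j) := by positivity
  nlinarith [mul_nonneg hh hqp, mul_le_mul_of_nonneg_left hW hh, mul_le_mul_of_nonneg_left bad1 hh,
    mul_le_mul_of_nonneg_left bad2 hh]

theorem total_kern (hc : G.Connected) (hr : G.IsRegularOfDegree d) (h : ℕ)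
    (hg : 2 * h + 1 < G.girth) (B : Finset V) :
    ((B.card : ℝ) * ((d - 1 : ℕ) : ℝ) ^ h) ^ 2 ≤
      Fintype.card V * ∑ u ∈ B, ∑ v ∈ B, kern G h u v := by
  have e1 : ∑ u ∈ B, ∑ v ∈ B, kern G h u v = ∑ x, (∑ u ∈ B, sA G h u x) ^ 2 := by
    simp_rw [kern]
    calc _ = ∑ u ∈ B, ∑ x, ∑ v ∈ B, sA G h u x * sA G h x v :=
          Finset.sum_congr rfl fun u _ => Finset.sum_comm
      _ = ∑ x, ∑ u ∈ B, ∑ v ∈ B, sA G h u x * sA G h x v := Finset.sum_comm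
      _ = _ := by
        refine Finset.sum_congr rfl fun x _ => ?_
        rw [sq, Finset.sum_mul_sum]
        refine Finset.sum_congr rfl fun u _ => Finset.sum_congr rfl fun v _ => ?_
        rw [sA_comm G h x v]
  rw [e1]
  have e2 := sq_sum_le_card_mul_sum_sq (s := (Finset.univ : Finset V))
    (f := fun x => ∑ u ∈ B, sA G h u x)
  rw [Finset.card_univ] at e2
  refine le_trans ?_ e2
  have e3 : (B.card : ℝ) * ((d - 1 : ℕ) : ℝ) ^ h ≤ ∑ x, ∑ u ∈ B, sA G h u x := by
    rw [Finset.sum_comm]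
    simp_rw [sA_sum]
    rw [← nsmul_eq_mul]
    apply Finset.card_nsmul_le_sum
    intro u _
    exact_mod_cast le_sph_card hc hr h u hg
  have : (0 : ℝ) ≤ (B.card : ℝ) * ((d - 1 : ℕ) : ℝ) ^ h := by positivity
  gcongr

theorem core {E : Type} [NormedAddCommGroup E] [InnerProductSpace ℝ E]
    (hc : G.Connected) (hr : G.IsRegularOfDegree d) (hd : 3 ≤ d) {h j m : ℕ}
    (hj : 1 ≤ j) (hjh : j ≤ h) (hj8 : 8 * (j - 1) ≤ h) (hm : 2 ≤ 2 ^ m)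
    (hg : 4 * h * 2 ^ m ≤ G.girth) (B : Finset V)
    (hB : (128 : ℝ) * Fintype.card V < B.card * ((d - 1 : ℕ) : ℝ) ^ j)
    (f : V → E) (s α : ℝ) (hs : 0 < s) (hα : 1 ≤ α)
    (hf : ∀ u ∈ B, ∀ v ∈ B, s * (G.dist u v : ℝ) ≤ ‖f u - f v‖ ∧
      ‖f u - f v‖ ≤ α * s * (G.dist u v : ℝ)) : (2 : ℝ) ^ m ≤ 4 * α ^ 2 := by
  have hg8 : 8 * h ≤ G.girth := by nlinarith
  set q : ℝ := ((d - 1 : ℕ) : ℝ) with hq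
  have hq1 : 1 ≤ q := by
    have : 1 ≤ d - 1 := by omega
    rw [hq]
    exact_mod_cast this
  have hn : (0 : ℝ) < Fintype.card V := by
    have := hc.nonempty
    exact_mod_cast Fintype.card_pos
  have hBpos : (0 : ℝ) < B.card := by
    by_contra hneg
    have : (B.card : ℝ) = 0 := le_antisymm (not_lt.mp hneg) (Nat.cast_nonneg _)
    rw [this] at hB
    nlinarith
  obtain ⟨S, hSB, hSn, hS⟩ := min_degree (kern G h) (kern_comm G h) (kern_nonneg G h)
    (64 * q ^ (2 * h - j)) B (by
      have t := total_kern hc hr h (by omega) B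
      rw [← hq] at t
      have hp : q ^ j * q ^ (2 * h - j) = (q ^ h) ^ 2 := by
        rw [← pow_add, ← pow_mul]; congr 1; omega
      have hqp : 0 < q ^ (2 * h - j) := by positivity
      rw [mul_pow, ← hp] at t
      have : Fintype.card V * (2 * (64 * q ^ (2 * h - j)) * B.card) <
          (B.card : ℝ) ^ 2 * (q ^ j * q ^ (2 * h - j)) := by
        have := mul_lt_mul_of_pos_right hB (mul_pos hqp hBpos)
        nlinarith
      exact lt_of_mul_lt_mul_left (this.trans_le t) hn.le)
  have : Nonempty S := hSn.to_subtype
  set W : S → ℝ := fun u => ∑ v ∈ S, kern G h u v with hWdef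
  have hWpos : ∀ u, 0 < W u := fun u => lt_of_lt_of_le (by positivity) (hS u u.2)
  set P : Matrix S S ℝ := fun u v => kern G h u v / W u with hP
  have hsumS : ∀ φ : V → ℝ, ∑ v : S, φ v = ∑ v ∈ S, φ v := fun φ => Finset.sum_coe_sort S φ
  have hsupp : ∀ (k : ℕ) (o i : S), (P ^ k) o i ≠ 0 → G.dist (o : V) i ≤ 2 * h * k := by
    intro k
    induction k with
    | zero =>
      intro o i hne
      have : o = i := by
        by_contra hoi; exact hne (by simp [hoi])
      subst this; simp
    | succ k ih =>
      intro o i hne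
      rw [pow_succ, Matrix.mul_apply] at hne
      obtain ⟨x, -, hx⟩ := Finset.exists_ne_zero_of_sum_ne_zero hne
      have h1 := ih o x (left_ne_zero_of_mul hx)
      have h2 : kern G h x i ≠ 0 := fun hz => right_ne_zero_of_mul hx (by simp [hP, hz])
      have h3 := kern_supp hc h2
      have h4 := hc.dist_triangle (u := (o : V)) (v := x) (w := i)
      rw [Nat.mul_succ]; omega
  have key := chain_bound P W hWpos
    (fun u v => div_nonneg (kern_nonneg _ _ _ _) (hWpos u).le)
    (fun u => by
      simp only [hP]
      rw [← Finset.sum_div, hsumS (fun v => kern G h u v)]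
      exact div_self (hWpos u).ne')
    (fun u v => by
      simp only [hP]
      rw [mul_div_cancel₀ _ (hWpos u).ne', mul_div_cancel₀ _ (hWpos v).ne', kern_comm])
    (fun u : S => f u) m (fun o i => s * (G.dist (o : V) i : ℝ)) (s * h) (α * s * (2 * h))
    (by positivity) (by simp) (fun _ _ => by positivity)
    (fun o i => (hf o (hSB o.2) i (hSB i.2)).1)
    (fun i k hik => by
      refine (hf i (hSB i.2) k (hSB k.2)).2.trans ?_
      have h2 : kern G h i k ≠ 0 := fun hz => hik (by simp [hP, hz])
      have h3 : (G.dist (i : V) k : ℝ) ≤ 2 * h := by exact_mod_cast kern_supp hc h2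
      gcongr)
    (fun o k hk i hne => by
      have h1 := hsupp k o i hne
      have h2 : 2 * h * k + 2 * h ≤ 2 * h * 2 ^ m := by
        have : 2 * h * (k + 1) ≤ 2 * h * 2 ^ m := Nat.mul_le_mul_left _ hk
        linarith
      have h4 := step_drift hc hr hd hj hjh hj8 (o : V) i (by nlinarith) (by omega) S (hS i i.2)
      have e : ∑ v : S, P i v * (s * (G.dist (o : V) v : ℝ)) =
          s * (∑ v ∈ S, kern G h i v * (G.dist (o : V) v : ℝ)) / W i := by
        simp only [hP]
        rw [hsumS (fun v => kern G h i v / W i * (s * (G.dist (o : V) v : ℝ))), Finset.mul_sum,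
          Finset.sum_div]
        refine Finset.sum_congr rfl fun v _ => ?_
        ring
      rw [e, le_div_iff₀ (hWpos i)]
      have := mul_le_mul_of_nonneg_left h4 hs.le
      simp only [hWdef]
      linarith)
  have hh : (0 : ℝ) < h := by
    have : 0 < h := by omega
    exact_mod_cast this
  have hfac : 0 < (2 : ℝ) ^ m * (s * h) ^ 2 := by positivity
  have : ((2 : ℝ) ^ m * (s * h) ^ 2) * 2 ^ m ≤ ((2 : ℝ) ^ m * (s * h) ^ 2) * (4 * α ^ 2) := by
    nlinarith [key]
  exact le_of_mul_le_mul_left this hfac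

end
end GirthRamsey

/-- The metric Ramsey problem for graphs of large girth: every subset of a
`d`-regular graph of girth at least `g` that `α`-embeds into `ℓ₂`
(for `1 ≤ α < √g/6`) has at most `C·(d-1)^(-c·g/α²)·|V|` points. -/
theorem girth_ramsey_upper :
    ∃ c C : ℝ, 0 < c ∧ 0 < C ∧
      ∀ (V : Type) [Fintype V] [DecidableEq V] (G : SimpleGraph V) [DecidableRel G.Adj]
        (d g : ℕ) (α : ℝ),
        G.Connected → 3 ≤ d → G.IsRegularOfDegree d → 0 < g → (g : ℕ∞) ≤ G.girth →
        1 ≤ α → α < Real.sqrt g / 6 →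
        ∀ B : Finset V,
          (∃ f : V → lp (fun _ : ℕ => ℝ) 2, ∃ s : ℝ, 0 < s ∧
            ∀ u ∈ B, ∀ v ∈ B,
              s * (G.dist u v : ℝ) ≤ ‖f u - f v‖ ∧
                ‖f u - f v‖ ≤ α * s * (G.dist u v : ℝ)) →
          (B.card : ℝ) ≤
            C * ((d : ℝ) - 1) ^ (-(c * g / α ^ 2)) * (Fintype.card V : ℝ) := by
  refine ⟨1 / 256, 128, by norm_num, by norm_num, ?_⟩
  intro V _ _ G _ d g α hc hd hr hg0 hg hα hαg B ⟨f, s, hs, hf⟩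
  have hg' : g ≤ G.girth := by exact_mod_cast hg
  by_contra hcon
  push Not at hcon
  have hα2 : 0 < α ^ 2 := by positivity
  have hα1 : 1 ≤ α ^ 2 := by nlinarith
  have h36 : 36 * α ^ 2 < g := by
    have h1 : 6 * α < Real.sqrt g := by linarith
    have h2 := Real.lt_sqrt (by positivity : 0 ≤ 6 * α) |>.mp h1
    nlinarith
  set K : ℝ := g / α ^ 2 with hK
  have hK36 : 36 < K := by rw [hK, lt_div_iff₀ hα2]; exact h36
  have hKg : K ≤ g := div_le_self (Nat.cast_nonneg _) hα1
  have hKα : K * α ^ 2 = g := div_mul_cancel₀ _ hα2.ne'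
  obtain ⟨h, hh⟩ : ∃ h : ℕ, h = ⌊K / 32⌋₊ := ⟨_, rfl⟩
  have hle : (h : ℝ) ≤ K / 32 := by rw [hh]; exact Nat.floor_le (by linarith)
  have hlt : K / 32 < h + 1 := by rw [hh]; exact Nat.lt_floor_add_one _
  have h1 : 1 ≤ h := by rw [hh]; apply Nat.le_floor; push_cast; linarith
  obtain ⟨j, hj⟩ : ∃ j : ℕ, j = 1 + h / 8 := ⟨_, rfl⟩
  have hj8 : h + 1 ≤ 8 * j := by omega
  have hj8' : (h : ℝ) + 1 ≤ 8 * j := by exact_mod_cast hj8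
  have h32 : 32 * h ≤ g := by
    have : (32 : ℝ) * h ≤ g := by linarith
    exact_mod_cast this
  have hh1 : (1 : ℝ) ≤ h := by exact_mod_cast h1
  have hne : g / (4 * h) ≠ 0 := by
    have : 1 ≤ g / (4 * h) := (Nat.le_div_iff_mul_le (by omega)).mpr (by omega)
    omega
  obtain ⟨m, hm⟩ : ∃ m : ℕ, m = Nat.log 2 (g / (4 * h)) := ⟨_, rfl⟩
  have hm1 : 2 ^ m ≤ g / (4 * h) := by rw [hm]; exact Nat.pow_log_le_self 2 hne
  have hm2 : g / (4 * h) < 2 ^ (m + 1) := by rw [hm]; exact Nat.lt_pow_succ_log_self (by norm_num) _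
  have hm1' : 4 * h * 2 ^ m ≤ g := by
    have := (Nat.le_div_iff_mul_le (by omega : 0 < 4 * h)).mp hm1
    linarith
  have hm2' : g < 8 * h * 2 ^ m := by
    have := (Nat.div_lt_iff_lt_mul (by omega : 0 < 4 * h)).mp hm2
    rw [pow_succ] at this
    linarith
  have hm2r : (g : ℝ) < 8 * h * 2 ^ m := by exact_mod_cast hm2'
  have hbig : 4 * α ^ 2 < (2 : ℝ) ^ m := by
    have hp : (0 : ℝ) < 2 ^ m := by positivity
    have : K * α ^ 2 < K * (2 ^ m / 4) := by
      rw [hKα]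
      nlinarith
    have := lt_of_mul_lt_mul_left this (by linarith)
    linarith
  have hm3 : 2 ≤ 2 ^ m := by
    have : (2 : ℝ) ≤ 2 ^ m := by linarith
    exact_mod_cast this
  have hcast : (d : ℝ) - 1 = ((d - 1 : ℕ) : ℝ) := by
    rw [Nat.cast_sub (by omega)]; simp
  have hq1 : (1 : ℝ) ≤ ((d - 1 : ℕ) : ℝ) := by
    have : 1 ≤ d - 1 := by omega
    exact_mod_cast this
  have hBig : (128 : ℝ) * Fintype.card V < B.card * ((d - 1 : ℕ) : ℝ) ^ j := by
    rw [hcast] at hcon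
    set q : ℝ := ((d - 1 : ℕ) : ℝ)
    have hqj : 0 < q ^ j := by positivity
    have e1 : (q ^ j)⁻¹ ≤ q ^ (-(1 / 256 * (g : ℝ) / α ^ 2)) := by
      rw [← Real.rpow_natCast, ← Real.rpow_neg (by linarith)]
      apply Real.rpow_le_rpow_of_exponent_le hq1
      have : 1 / 256 * (g : ℝ) / α ^ 2 = K / 256 := by rw [hK]; ring
      rw [this]
      linarith
    have e2 : 128 * (q ^ j)⁻¹ * (Fintype.card V : ℝ) < B.card := by
      refine lt_of_le_of_lt ?_ hcon
      gcongr
    have := mul_lt_mul_of_pos_right e2 hqj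
    have e3 : 128 * (q ^ j)⁻¹ * (Fintype.card V : ℝ) * q ^ j = 128 * Fintype.card V := by
      field_simp
    linarith
  have := GirthRamsey.core hc hr hd (h := h) (j := j) (m := m) (by omega) (by omega) (by omega) hm3
    (hm1'.trans hg') B hBig f s α hs hα hf
  linarith
end

section
/- Let G = (V,E) be a finite simple graph with maximal degree at most Δ (Δ ≥ 1), let p ≥ 1 be real, and let A > 0 be a constant such that for every f : V → ℝ one has Σ_{(u,v) ∈ V×V} |f(u) − f(v)|^p ≤ (Ap)^p·(|V|/Δ)·Σ_{{u,v} ∈ E} |f(u) − f(v)|^p (the left sum over all ordered pairs of vertices, the right sum over edges, each counted once). Then: (i) for every real q with 1 ≤ q ≤ p and every f : V → ℓ_q, Σ_{(u,v) ∈ V×V} ‖f(u) − f(v)‖_q^q ≤ (Ap)^p·(|V|/Δ)·Σ_{{u,v} ∈ E} ‖f(u) − f(v)‖_q^q; and (ii) for every real q with p < q < ∞ and every f : V → ℓ_q, Σ_{(u,v) ∈ V×V} ‖f(u) − f(v)‖_q^q ≤ (4Aq)^q·(|V|/Δ)·Σ_{{u,v} ∈ E} ‖f(u) − f(v)‖_q^q.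 -/
/-- lifting a scalar inequality to `ℓ_q` -/
lemma lift_lq (V : Type) [Fintype V] (G : SimpleGraph V) [DecidableRel G.Adj]
    (K q : ℝ) (hq : 1 ≤ q)
    (h : ∀ f : V → ℝ, ∑ u, ∑ v, |f u - f v| ^ q ≤
      K * ((∑ u, ∑ v, if G.Adj u v then |f u - f v| ^ q else 0) / 2))
    (f : V → lp (fun _ : ℕ => ℝ) (ENNReal.ofReal q)) :
    ∑ u, ∑ v, ‖f u - f v‖ ^ q ≤
      K * ((∑ u, ∑ v, if G.Adj u v then ‖f u - f v‖ ^ q else 0) / 2) := by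
  have hq0 : 0 < q := by linarith
  have hr : (ENNReal.ofReal q).toReal = q := ENNReal.toReal_ofReal hq0.le
  have key : ∀ u v, HasSum (fun i => |f u i - f v i| ^ q) (‖f u - f v‖ ^ q) := by
    intro u v
    have := lp.hasSum_norm (p := ENNReal.ofReal q) (by rw [hr]; exact hq0) (f u - f v)
    rw [hr] at this
    simpa [Real.norm_eq_abs] using this
  have h1 : HasSum (fun i => ∑ u, ∑ v, |f u i - f v i| ^ q) (∑ u, ∑ v, ‖f u - f v‖ ^ q) :=
    hasSum_sum fun u _ => hasSum_sum fun v _ => key u v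
  have h2 : HasSum (fun i => ∑ u, ∑ v, if G.Adj u v then |f u i - f v i| ^ q else 0)
      (∑ u, ∑ v, if G.Adj u v then ‖f u - f v‖ ^ q else 0) := by
    refine hasSum_sum fun u _ => hasSum_sum fun v _ => ?_
    by_cases hA : G.Adj u v
    · simpa [hA] using key u v
    · simp [hA]
  exact hasSum_le (fun i => h fun u => f u i) h1 ((h2.div_const 2).mul_left K)

/-- pointwise bound for the signed power -/
lemma spow_bound (s : ℝ) (hs : 1 < s) (a b : ℝ) :
    |a * |a| ^ (s - 1) - b * |b| ^ (s - 1)| ≤ s * (|a - b| * max |a| |b| ^ (s - 1)) := by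
  have nn : ∀ x y : ℝ, 0 ≤ y → y ≤ x →
      |x * |x| ^ (s - 1) - y * |y| ^ (s - 1)| ≤ s * (|x - y| * max |x| |y| ^ (s - 1)) := by
    intro x y hy hxy
    rcases (hy.trans hxy).eq_or_lt with h0 | hx
    · have : y = 0 := by linarith
      subst this; simp [← h0]
    rw [abs_of_pos hx, abs_of_nonneg hy, max_eq_left hxy, abs_of_nonneg (sub_nonneg.2 hxy)]
    have e : ∀ z : ℝ, 0 ≤ z → z * z ^ (s - 1) = z ^ s := by
      intro z hz
      nth_rewrite 1 [← Real.rpow_one z]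
      rw [← Real.rpow_add_of_nonneg hz (by norm_num) (by linarith)]
      congr 1; ring
    have hm : y ^ s ≤ x ^ s := Real.rpow_le_rpow hy hxy (by linarith)
    rw [e x hx.le, e y hy, abs_of_nonneg (by linarith)]
    have hb := one_add_mul_self_le_rpow_one_add (s := y / x - 1) (by
      have : 0 ≤ y / x := by positivity
      linarith) hs.le
    rw [add_sub_cancel, Real.div_rpow hy hx.le] at hb
    have hxs : 0 < x ^ s := by positivity
    have h2 := mul_le_mul_of_nonneg_right hb hxs.le
    rw [div_mul_cancel₀ _ hxs.ne'] at h2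
    rw [← e x hx.le] at h2 ⊢
    have : (1 + s * (y / x - 1)) * (x * x ^ (s-1)) = x * x^(s-1) + s * (y - x) * x^(s-1) := by
      field_simp
    rw [this] at h2
    linarith
  have np : ∀ x y : ℝ, 0 ≤ x → y ≤ 0 →
      |x * |x| ^ (s - 1) - y * |y| ^ (s - 1)| ≤ s * (|x - y| * max |x| |y| ^ (s - 1)) := by
    intro x y hx hy
    have h1 : |x| ^ (s-1) ≤ max |x| |y| ^ (s - 1) :=
      Real.rpow_le_rpow (abs_nonneg _) (le_max_left _ _) (by linarith)
    have h2 : |y| ^ (s-1) ≤ max |x| |y| ^ (s - 1) :=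
      Real.rpow_le_rpow (abs_nonneg _) (le_max_right _ _) (by linarith)
    have h3 : 0 ≤ |x| ^ (s-1) := by positivity
    have h4 : 0 ≤ |y| ^ (s-1) := by positivity
    rw [abs_of_nonneg (a := x - y) (by linarith), abs_of_nonneg (by nlinarith)]
    have h5 : 0 ≤ (x - y) * max |x| |y| ^ (s - 1) := mul_nonneg (by linarith) (h3.trans h1)
    nlinarith
  have sy : ∀ x y : ℝ,
      |x * |x| ^ (s - 1) - y * |y| ^ (s - 1)| ≤ s * (|x - y| * max |x| |y| ^ (s - 1)) →
      |y * |y| ^ (s - 1) - x * |x| ^ (s - 1)| ≤ s * (|y - x| * max |y| |x| ^ (s - 1)) := by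
    intro x y h
    rwa [abs_sub_comm, abs_sub_comm y, max_comm]
  have ng : ∀ x y : ℝ,
      |(-x) * |(-x)| ^ (s - 1) - (-y) * |(-y)| ^ (s - 1)| ≤
        s * (|(-x) - (-y)| * max |(-x)| |(-y)| ^ (s - 1)) →
      |x * |x| ^ (s - 1) - y * |y| ^ (s - 1)| ≤ s * (|x - y| * max |x| |y| ^ (s - 1)) := by
    intro x y h
    rw [abs_neg, abs_neg, show -x - -y = -(x - y) by ring, abs_neg,
      show -x * |x| ^ (s - 1) - -y * |y| ^ (s - 1) = -(x * |x| ^ (s - 1) - y * |y| ^ (s - 1)) by ring,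
      abs_neg] at h
    exact h
  rcases le_total 0 a with ha | ha <;> rcases le_total 0 b with hb | hb
  · rcases le_total a b with h | h
    · exact sy _ _ (nn b a ha h)
    · exact nn a b hb h
  · exact np a b ha hb
  · exact sy _ _ (np b a hb ha)
  · apply ng
    rcases le_total a b with h | h
    · exact nn _ _ (by linarith) (by linarith)
    · exact sy _ _ (nn _ _ (by linarith) (by linarith))

lemma exists_center (V : Type) [Fintype V] (f : V → ℝ) (s : ℝ) (hs : 1 < s) :
    ∃ c : ℝ, ∑ u, (f u - c) * |f u - c| ^ (s - 1) = 0 := by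
  have hc : Continuous fun c : ℝ => ∑ u, (f u - c) * |f u - c| ^ (s - 1) := by
    refine continuous_finsetSum _ fun u _ => ?_
    refine (continuous_const.sub continuous_id).mul ?_
    exact (continuous_const.sub continuous_id).abs.rpow_const fun _ => Or.inr (by linarith)
  have h1 : ∀ u, |f u| ≤ ∑ w, |f w| := fun u =>
    Finset.single_le_sum (f := fun w => |f w|) (fun _ _ => abs_nonneg _) (Finset.mem_univ u)
  have := mem_range_of_exists_le_of_exists_ge (c := (0:ℝ)) hc
    ⟨∑ w, |f w|, Finset.sum_nonpos fun u _ => mul_nonpos_of_nonpos_of_nonneg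
      (by linarith [h1 u, le_abs_self (f u)]) (by positivity)⟩
    ⟨-∑ w, |f w|, Finset.sum_nonneg fun u _ => mul_nonneg
      (by linarith [h1 u, neg_abs_le (f u)]) (by positivity)⟩
  exact this

/-- Jensen -/
lemma jensen_aux (V : Type) [Fintype V] (g : V → ℝ) (p : ℝ) (hp : 1 ≤ p) (h0 : ∑ u, g u = 0) (u : V) :
    (Fintype.card V : ℝ) * |g u| ^ p ≤ ∑ v, |g u - g v| ^ p := by
  have hn : (0:ℝ) < Fintype.card V := by exact_mod_cast Fintype.card_pos_iff.2 ⟨u⟩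
  have h1 : (Fintype.card V : ℝ) * |g u| ≤ ∑ v, |g u - g v| := by
    have : ∑ v, (g u - g v) = (Fintype.card V : ℝ) * g u := by
      simp [Finset.sum_sub_distrib, h0]
    calc _ = |∑ v, (g u - g v)| := by rw [this, abs_mul, abs_of_pos hn]
      _ ≤ _ := Finset.abs_sum_le_sum_abs _ _
  have h3 := Real.rpow_sum_le_const_mul_sum_rpow_of_nonneg (s := Finset.univ)
    (f := fun v => |g u - g v|) hp (fun _ _ => abs_nonneg _)
  have h4 := (Real.rpow_le_rpow (by positivity) h1 (by linarith : 0 ≤ p)).trans h3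
  rw [Real.mul_rpow hn.le (abs_nonneg _)] at h4
  simp only [Finset.card_univ] at h4
  have h5 : (Fintype.card V : ℝ) ^ p = (Fintype.card V : ℝ) ^ (p - 1) * Fintype.card V := by
    rw [Real.rpow_sub_one hn.ne']; field_simp
  rw [h5, mul_assoc] at h4
  exact le_of_mul_le_mul_left h4 (by positivity)

lemma scalar_large (V : Type) [Fintype V] [DecidableEq V] (G : SimpleGraph V) [DecidableRel G.Adj]
    (Δ : ℕ) (hΔ : 1 ≤ Δ) (hdeg : ∀ v : V, G.degree v ≤ Δ)
    (p A : ℝ) (hp : 1 ≤ p) (hA : 0 < A)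
    (hpoin : ∀ f : V → ℝ,
      ∑ u, ∑ v, |f u - f v| ^ p ≤
        (A * p) ^ p * ((Fintype.card V : ℝ) / Δ) *
          ((∑ u, ∑ v, if G.Adj u v then |f u - f v| ^ p else 0) / 2))
    (q : ℝ) (hpq : p < q) (f : V → ℝ) :
    ∑ u, ∑ v, |f u - f v| ^ q ≤
        (4 * A * q) ^ q * ((Fintype.card V : ℝ) / Δ) *
          ((∑ u, ∑ v, if G.Adj u v then |f u - f v| ^ q else 0) / 2) := by
  have hp0 : 0 < p := by linarith
  have hq0 : 0 < q := by linarith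
  have hD : (0:ℝ) < Δ := by exact_mod_cast hΔ
  set s : ℝ := q / p with hs_def
  have hs : 1 < s := by rw [hs_def, lt_div_iff₀ hp0]; linarith
  obtain ⟨c, hc⟩ := exists_center V f s hs
  set h : V → ℝ := fun u => f u - c with hh
  have hfh : ∀ u v, f u - f v = h u - h v := fun u v => by simp [hh]
  simp only [hfh]
  set g : V → ℝ := fun u => h u * |h u| ^ (s - 1) with hg
  have hg0 : ∑ u, g u = 0 := hc
  have hgabs : ∀ u, |g u| ^ p = |h u| ^ q := by
    intro u
    have e : |g u| = |h u| ^ s := by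
      rw [hg]
      simp only [abs_mul, abs_of_nonneg (Real.rpow_nonneg (abs_nonneg (h u)) (s-1))]
      nth_rewrite 1 [← Real.rpow_one |h u|]
      rw [← Real.rpow_add_of_nonneg (abs_nonneg _) (by norm_num) (by linarith)]
      congr 1; ring
    rw [e, ← Real.rpow_mul (abs_nonneg _), hs_def, div_mul_cancel₀ _ hp0.ne']
  set S : ℝ := ∑ u, |h u| ^ q with hS
  have hS0 : 0 ≤ S := Finset.sum_nonneg fun u _ => by positivity
  set n : ℝ := (Fintype.card V : ℝ) with hn
  have hn0 : 0 ≤ n := by positivity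
  set E : ℝ := (∑ u, ∑ v, if G.Adj u v then |h u - h v| ^ q else 0) / 2 with hE
  have hE0 : 0 ≤ E := by
    refine div_nonneg (Finset.sum_nonneg fun u _ => Finset.sum_nonneg fun v _ => ?_) (by norm_num)
    split_ifs <;> positivity
  -- lower bound
  have low : n * S ≤ ∑ u, ∑ v, |g u - g v| ^ p := by
    rw [hS, Finset.mul_sum]
    refine Finset.sum_le_sum fun u _ => ?_
    rw [← hgabs u]
    exact jensen_aux V g p hp hg0 u
  have maxle : ∀ u v, max |h u| |h v| ^ q ≤ |h u| ^ q + |h v| ^ q := by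
    intro u v
    have h1 : 0 ≤ |h u| ^ q := by positivity
    have h2 : 0 ≤ |h v| ^ q := by positivity
    rcases max_choice |h u| |h v| with e | e <;> rw [e] <;> linarith
  -- final upper bound
  have up : ∑ u, ∑ v, |h u - h v| ^ q ≤ 4 ^ q * (n * S) := by
    have h1 : ∀ u v, |h u - h v| ^ q ≤ 2 ^ q * (|h u| ^ q + |h v| ^ q) := by
      intro u v
      calc |h u - h v| ^ q ≤ (2 * max |h u| |h v|) ^ q := by
            apply Real.rpow_le_rpow (abs_nonneg _) _ hq0.le
            have := abs_sub (h u) (h v)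
            have := le_max_left |h u| |h v|
            have := le_max_right |h u| |h v|
            linarith
        _ = 2 ^ q * max |h u| |h v| ^ q := Real.mul_rpow (by norm_num) (by positivity)
        _ ≤ _ := mul_le_mul_of_nonneg_left (maxle u v) (by positivity)
    have h2 : ∑ u, ∑ v, |h u - h v| ^ q ≤ ∑ u, ∑ v, 2 ^ q * (|h u| ^ q + |h v| ^ q) :=
      Finset.sum_le_sum fun u _ => Finset.sum_le_sum fun v _ => h1 u v
    have h3 : ∑ u, ∑ v, (2:ℝ) ^ q * (|h u| ^ q + |h v| ^ q) = 2 ^ q * (2 * (n * S)) := by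
      simp only [← Finset.mul_sum, Finset.sum_add_distrib, Finset.sum_const, Finset.card_univ,
        nsmul_eq_mul, ← hS, ← hn]
      ring
    have h4 : (4:ℝ) ^ q = 2 ^ q * 2 ^ q := by
      rw [← Real.mul_rpow (by norm_num) (by norm_num)]; norm_num
    have h5 : (2:ℝ) ≤ 2 ^ q := by
      simpa using Real.rpow_le_rpow_of_exponent_le (x := 2) (by norm_num) (hp.trans hpq.le)
    calc _ ≤ _ := h2
      _ = _ := h3
      _ ≤ 2 ^ q * (2 ^ q * (n * S)) := by gcongr
      _ = _ := by rw [h4]; ring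
  -- edge sum
  set T : Finset (V × V) := Finset.univ.filter fun x => G.Adj x.1 x.2 with hT
  have conv : ∀ F : V → V → ℝ, (∑ u, ∑ v, if G.Adj u v then F u v else 0) = ∑ x ∈ T, F x.1 x.2 := by
    intro F
    rw [hT, Finset.sum_filter, Fintype.sum_prod_type]
  have hM : ∑ x ∈ T, max |h x.1| |h x.2| ^ q ≤ 2 * (Δ * S) := by
    have deg1 : ∀ u, (∑ v, if G.Adj u v then (1:ℝ) else 0) ≤ Δ := by
      intro u
      have := hdeg u
      rw [← G.card_neighborFinset_eq_degree, G.neighborFinset_eq_filter] at this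
      rw [← Finset.sum_filter]
      simp only [Finset.sum_const, nsmul_eq_mul, mul_one]
      exact_mod_cast this
    have d1 : (∑ u, ∑ v, if G.Adj u v then |h u| ^ q else 0) ≤ Δ * S := by
      rw [hS, Finset.mul_sum]
      refine Finset.sum_le_sum fun u _ => ?_
      calc (∑ v, if G.Adj u v then |h u| ^ q else 0)
          = (∑ v, if G.Adj u v then (1:ℝ) else 0) * |h u| ^ q := by
            rw [Finset.sum_mul]; simp
        _ ≤ _ := mul_le_mul_of_nonneg_right (deg1 u) (by positivity)
    have d2 : (∑ u, ∑ v, if G.Adj u v then |h v| ^ q else 0) ≤ Δ * S := by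
      rw [Finset.sum_comm]
      simpa only [G.adj_comm] using d1
    rw [conv fun u v => |h u| ^ q] at d1
    rw [conv fun u v => |h v| ^ q] at d2
    calc _ ≤ ∑ x ∈ T, (|h x.1| ^ q + |h x.2| ^ q) := Finset.sum_le_sum fun x _ => maxle _ _
      _ ≤ _ := by rw [Finset.sum_add_distrib]; linarith
  have hE2 : ∑ x ∈ T, |h x.1 - h x.2| ^ q = 2 * E := by
    rw [hE, conv fun u v => |h u - h v| ^ q]; ring
  have edge : (∑ u, ∑ v, if G.Adj u v then |g u - g v| ^ p else 0) / 2 ≤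
      s ^ p * (E ^ (p / q) * (Δ * S) ^ (1 - p / q)) := by
    rw [conv fun u v => |g u - g v| ^ p]
    have b1 : ∀ x ∈ T, |g x.1 - g x.2| ^ p ≤
        s ^ p * (|h x.1 - h x.2| ^ p * max |h x.1| |h x.2| ^ (q - p)) := by
      intro x _
      have hmx : 0 ≤ max |h x.1| |h x.2| := by positivity
      calc _ ≤ (s * (|h x.1 - h x.2| * max |h x.1| |h x.2| ^ (s - 1))) ^ p :=
            Real.rpow_le_rpow (abs_nonneg _) (spow_bound s hs _ _) hp0.le
        _ = _ := by
          rw [Real.mul_rpow (by linarith) (by positivity), Real.mul_rpow (by positivity) (by positivity),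
            ← Real.rpow_mul hmx]
          congr 3
          rw [hs_def]; field_simp
    have b2 := Finset.sum_le_sum b1
    rw [← Finset.mul_sum] at b2
    have hconj : Real.HolderConjugate (q / p) (q / (q - p)) := by
      rw [Real.holderConjugate_iff]
      refine ⟨hs, ?_⟩
      have : q - p ≠ 0 := by linarith
      field_simp; ring
    have b3 := Real.inner_le_Lp_mul_Lq_of_nonneg T hconj
      (f := fun x => |h x.1 - h x.2| ^ p) (g := fun x => max |h x.1| |h x.2| ^ (q - p))
      (fun _ _ => by positivity) (fun _ _ => by positivity)
    have c1 : ∀ x : V × V, (|h x.1 - h x.2| ^ p) ^ (q / p) = |h x.1 - h x.2| ^ q := fun x => by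
      rw [← Real.rpow_mul (abs_nonneg _)]; congr 1; field_simp
    have c2 : ∀ x : V × V, (max |h x.1| |h x.2| ^ (q - p)) ^ (q / (q - p)) = max |h x.1| |h x.2| ^ q :=
      fun x => by
        rw [← Real.rpow_mul (by positivity)]; congr 1
        have : q - p ≠ 0 := by linarith
        field_simp
    simp only [c1, c2, hE2, one_div_div] at b3
    have e2 : (q - p) / q = 1 - p / q := by field_simp
    rw [e2] at b3
    have hr1 : p / q < 1 := by rw [div_lt_one hq0]; exact hpq
    have b4 : (2 * E) ^ (p / q) * (∑ x ∈ T, max |h x.1| |h x.2| ^ q) ^ (1 - p / q) ≤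
        2 * (E ^ (p / q) * (Δ * S) ^ (1 - p / q)) := by
      calc _ ≤ (2 * E) ^ (p / q) * (2 * (Δ * S)) ^ (1 - p / q) := by
            apply mul_le_mul_of_nonneg_left _ (by positivity)
            apply Real.rpow_le_rpow _ hM (by linarith)
            exact Finset.sum_nonneg fun _ _ => by positivity
        _ = ((2:ℝ) ^ (p / q) * 2 ^ (1 - p / q)) * (E ^ (p / q) * (Δ * S) ^ (1 - p / q)) := by
            rw [Real.mul_rpow (by norm_num) hE0, Real.mul_rpow (by norm_num) (by positivity)]; ring
        _ = _ := by rw [← Real.rpow_add (by norm_num)]; simp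
    have b5 : s ^ p * ∑ x ∈ T, |h x.1 - h x.2| ^ p * max |h x.1| |h x.2| ^ (q - p) ≤
        s ^ p * (2 * (E ^ (p / q) * (Δ * S) ^ (1 - p / q))) :=
      mul_le_mul_of_nonneg_left (b3.trans b4) (by positivity)
    linarith
  have main : n * S ≤ (A * p) ^ p * (n / Δ) * (s ^ p * (E ^ (p / q) * (Δ * S) ^ (1 - p / q))) :=
    (low.trans (hpoin g)).trans (mul_le_mul_of_nonneg_left edge (by positivity))
  have fin : n * S ≤ (A * q) ^ q * (n / Δ) * E := by
    rcases hn0.eq_or_lt with h0 | hnpos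
    · simp [← h0]
    rcases hS0.eq_or_lt with h0 | hSpos
    · rw [← h0]; simp only [mul_zero]; positivity
    have k : (A * p) ^ p * s ^ p = (A * q) ^ p := by
      rw [← Real.mul_rpow (by positivity) (by positivity), hs_def]
      congr 1; field_simp
    have m2 : Δ * S ≤ (A * q) ^ p * E ^ (p / q) * (Δ * S) ^ (1 - p / q) := by
      have : (n / Δ) * (Δ * S) ≤ (n / Δ) * ((A * q) ^ p * E ^ (p / q) * (Δ * S) ^ (1 - p / q)) := by
        calc (n / Δ) * (Δ * S) = n * S := by field_simp
          _ ≤ _ := main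
          _ = _ := by rw [← k]; ring
      exact le_of_mul_le_mul_left this (by positivity)
    have hDS : 0 < Δ * S := by positivity
    have m3 : (Δ * S) ^ (p / q) ≤ ((A * q) ^ q * E) ^ (p / q) := by
      rw [Real.mul_rpow (by positivity) hE0, ← Real.rpow_mul (by positivity), mul_div_cancel₀ _ hq0.ne']
      have e : Δ * S = (Δ * S) ^ (p / q) * (Δ * S) ^ (1 - p / q) := by
        rw [← Real.rpow_add hDS]; simp
      have hpos : 0 < (Δ * S) ^ (1 - p / q) := by positivity
      exact le_of_mul_le_mul_right (e.symm.le.trans m2) hpos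
    have m4 : Δ * S ≤ (A * q) ^ q * E :=
      (Real.rpow_le_rpow_iff hDS.le (by positivity) (by positivity)).1 m3
    calc n * S = (n / Δ) * (Δ * S) := by field_simp
      _ ≤ (n / Δ) * ((A * q) ^ q * E) := mul_le_mul_of_nonneg_left m4 (by positivity)
      _ = _ := by ring
  calc _ ≤ _ := up
    _ ≤ 4 ^ q * ((A * q) ^ q * (n / Δ) * E) := mul_le_mul_of_nonneg_left fin (by positivity)
    _ = _ := by
      rw [mul_assoc 4 A q, Real.mul_rpow (x := 4) (y := A * q) (by norm_num) (by positivity)]; ring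

open MeasureTheory in
lemma kernel_exists (p q : ℝ) (hq : 1 ≤ q) (hqp : q < p) :
    ∃ (ψ : ℝ → ℝ) (C : ℝ), 0 < C ∧ ∀ x y : ℝ,
      Integrable (fun t => |ψ (x - t) - ψ (y - t)| ^ p) ∧
      ∫ t, |ψ (x - t) - ψ (y - t)| ^ p = C * |x - y| ^ q := by
  have hp0 : 0 < p := by linarith
  set a : ℝ := (q - 1) / p with ha
  have ha0 : 0 ≤ a := div_nonneg (by linarith) hp0.le
  have ha1 : a ≤ 1 := by rw [ha, div_le_one hp0]; linarith
  have hap : a * p = q - 1 := by rw [ha]; field_simp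
  set ψ : ℝ → ℝ := fun y => if 0 < y then |y| ^ a else -|y| ^ a with hψ
  have hψm : Measurable ψ := by
    apply Measurable.ite measurableSet_Ioi
    · fun_prop
    · fun_prop
  have hψs : ∀ s y : ℝ, 0 < s → ψ (s * y) = s ^ a * ψ y := by
    intro s y hs
    simp only [hψ, mul_pos_iff_of_pos_left hs, abs_mul, abs_of_pos hs,
      Real.mul_rpow hs.le (abs_nonneg y)]
    split_ifs <;> ring
  set F : ℝ → ℝ := fun t => |ψ (1 - t) - ψ (0 - t)| ^ p with hF
  have hF0 : ∀ t, 0 ≤ F t := fun t => by positivity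
  have hFm : Measurable F := by
    have h1 : Measurable fun t => ψ (1 - t) := hψm.comp (by fun_prop)
    have h2 : Measurable fun t => ψ (0 - t) := hψm.comp (by fun_prop)
    exact (measurable_norm.comp (h1.sub h2)).pow_const p
  set β : ℝ := (a - 1) * p with hβ
  have hβ1 : β < -1 := by rw [hβ, sub_mul, hap]; linarith
  set J : ℝ → ℝ := (Set.Ioi (1:ℝ)).indicator fun t => t ^ β with hJ
  have hJi : Integrable J :=
    (integrable_indicator_iff measurableSet_Ioi).2 (integrableOn_Ioi_rpow_of_lt hβ1 one_pos)
  have hJ0 : ∀ t, 0 ≤ J t := fun t => by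
    apply Set.indicator_nonneg
    intro x hx
    have : (0:ℝ) < x := one_pos.trans hx
    positivity
  set I : ℝ → ℝ := (Set.Icc (0:ℝ) 1).indicator fun t => (2:ℝ) ^ p with hI
  have hIi : Integrable I := by
    refine (integrable_indicator_iff measurableSet_Icc).2 ?_
    exact integrableOn_const (by simp)
  have hI0 : ∀ t, 0 ≤ I t := fun t => by
    apply Set.indicator_nonneg
    intro x hx
    positivity
  have pw : ∀ w : ℝ, 1 < w → |w ^ a - (w - 1) ^ a| ^ p ≤ w ^ β := by
    intro w hw
    have hw0 : 0 < w := by linarith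
    have h1 : (w - 1) ^ a ≤ w ^ a := Real.rpow_le_rpow (by linarith) (by linarith) ha0
    rw [abs_of_nonneg (by linarith), hβ, Real.rpow_mul hw0.le]
    apply Real.rpow_le_rpow (by linarith) _ hp0.le
    have h2 : (1 - 1 / w) ≤ (1 - 1 / w) ^ a := by
      have l0 : 0 < 1 - 1 / w := by
        have : 1 / w < 1 := by rw [div_lt_one hw0]; exact hw
        linarith
      have l1 : 1 - 1 / w ≤ 1 := by
        have : 0 < 1 / w := by positivity
        linarith
      simpa using Real.rpow_le_rpow_of_exponent_ge l0 l1 ha1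
    have h3 : (w - 1) ^ a = w ^ a * (1 - 1 / w) ^ a := by
      rw [← Real.mul_rpow hw0.le]
      · congr 1; field_simp
      · have : 1 / w < 1 := by rw [div_lt_one hw0]; exact hw
        linarith
    rw [h3, Real.rpow_sub_one hw0.ne']
    have h4 := mul_le_mul_of_nonneg_left h2 (Real.rpow_nonneg hw0.le a)
    have h5 : w ^ a * (1 - 1 / w) = w ^ a - w ^ a / w := by ring
    linarith
  have bound : ∀ t, F t ≤ J t + J (1 - t) + I t := by
    intro t
    have j1 := hJ0 t
    have j2 := hJ0 (1 - t)
    have i1 := hI0 t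
    rcases lt_or_ge 1 t with h1 | h1
    · have : J t = t ^ β := by simp [hJ, h1]
      have e : F t ≤ t ^ β := by
        have : F t = |t ^ a - (t - 1) ^ a| ^ p := by
          simp only [hF, hψ]
          rw [if_neg (by linarith), if_neg (by linarith), abs_of_neg (a := 1 - t) (by linarith),
            abs_of_neg (a := 0 - t) (by linarith)]
          congr 2
          rw [show -(1 - t) = t - 1 by ring, show -(0 - t) = t by ring]; ring
        rw [this]; exact pw t h1
      linarith
    rcases lt_or_ge t 0 with h0 | h0
    · have : J (1 - t) = (1 - t) ^ β := by simp [hJ, h0]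
      have e : F t ≤ (1 - t) ^ β := by
        have : F t = |(1 - t) ^ a - (1 - t - 1) ^ a| ^ p := by
          simp only [hF, hψ]
          rw [if_pos (by linarith), if_pos (by linarith), abs_of_pos (a := 1 - t) (by linarith),
            abs_of_pos (a := 0 - t) (by linarith)]
          congr 4; ring
        rw [this]; exact pw _ (by linarith)
      linarith
    · have : I t = 2 ^ p := by simp [hI, h0, h1]
      have e : F t ≤ 2 ^ p := by
        apply Real.rpow_le_rpow (abs_nonneg _) _ hp0.le
        have b : ∀ y, |y| ≤ 1 → |ψ y| ≤ 1 := by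
          intro y hy
          have k1 : |y| ^ a ≤ 1 := Real.rpow_le_one (abs_nonneg _) hy ha0
          have k2 : 0 ≤ |y| ^ a := by positivity
          simp only [hψ]
          split_ifs <;> rw [abs_le] <;> constructor <;> linarith
        have := b (1 - t) (by rw [abs_le]; constructor <;> linarith)
        have := b (0 - t) (by rw [abs_le]; constructor <;> linarith)
        have := abs_sub (ψ (1 - t)) (ψ (0 - t))
        linarith
      linarith
  have hFi : Integrable F := by
    refine Integrable.mono' ((hJi.add (hJi.comp_sub_left 1)).add hIi) hFm.aestronglyMeasurable ?_
    filter_upwards with t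
    rw [Real.norm_of_nonneg (hF0 t)]
    exact bound t
  have hC : 0 < ∫ t, F t := by
    have h1 : (1:ℝ) ≤ ∫ t in Set.Ioo (0:ℝ) 1, F t := by
      have : ∫ t in Set.Ioo (0:ℝ) 1, (1:ℝ) ≤ ∫ t in Set.Ioo (0:ℝ) 1, F t := by
        apply setIntegral_mono_on (integrableOn_const (by simp)) hFi.integrableOn measurableSet_Ioo
        intro t ht
        apply Real.one_le_rpow _ hp0.le
        have p1 : 1 - t ≤ (1 - t) ^ a := by
          simpa using Real.rpow_le_rpow_of_exponent_ge (x := 1 - t) (by linarith [ht.2])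
            (by linarith [ht.1]) ha1
        have p2 : t ≤ t ^ a := by
          simpa using Real.rpow_le_rpow_of_exponent_ge ht.1 ht.2.le ha1
        have e1 : ψ (1 - t) = (1 - t) ^ a := by
          simp only [hψ]
          rw [if_pos (by linarith [ht.2]), abs_of_pos (by linarith [ht.2])]
        have e2 : ψ (0 - t) = - t ^ a := by
          simp only [hψ]
          rw [if_neg (by linarith [ht.1]), abs_of_neg (by linarith [ht.1])]
          congr 2; ring
        rw [e1, e2]
        refine le_trans ?_ (le_abs_self _)
        linarith
      simpa using this
    have h2 := setIntegral_le_integral (s := Set.Ioo (0:ℝ) 1) hFi (Filter.Eventually.of_forall hF0)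
    linarith
  refine ⟨ψ, ∫ t, F t, hC, ?_⟩
  have lt_case : ∀ x y : ℝ, y < x → Integrable (fun t => |ψ (x - t) - ψ (y - t)| ^ p) ∧
      ∫ t, |ψ (x - t) - ψ (y - t)| ^ p = (∫ t, F t) * |x - y| ^ q := by
    intro x y hxy
    have hs : 0 < x - y := by linarith
    have e : (fun t => |ψ (x - t) - ψ (y - t)| ^ p) =
        fun t => (x - y) ^ (q - 1) * F ((t - y) / (x - y)) := by
      funext t
      have e1 : ψ (x - t) = (x - y) ^ a * ψ (1 - (t - y) / (x - y)) := by
        rw [← hψs _ _ hs]; congr 1; field_simp; ring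
      have e2 : ψ (y - t) = (x - y) ^ a * ψ (0 - (t - y) / (x - y)) := by
        rw [← hψs _ _ hs]; congr 1; field_simp; ring
      rw [e1, e2, ← mul_sub, abs_mul, abs_of_pos (by positivity),
        Real.mul_rpow (by positivity) (abs_nonneg _), ← Real.rpow_mul hs.le, hap]
    have i1 : Integrable fun t => F (t / (x - y)) := hFi.comp_div hs.ne'
    have i2 : Integrable fun t => F ((t - y) / (x - y)) := i1.comp_sub_right y
    rw [e]
    refine ⟨i2.const_mul _, ?_⟩
    rw [integral_const_mul, integral_sub_right_eq_self (fun t => F (t / (x - y))) y,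
      Measure.integral_comp_div, abs_of_pos hs, smul_eq_mul, Real.rpow_sub_one hs.ne']
    field_simp
  intro x y
  rcases lt_trichotomy x y with h | h | h
  · have := lt_case y x h
    simpa only [abs_sub_comm] using this
  · subst h
    simp [Real.zero_rpow hp0.ne', Real.zero_rpow (by linarith : q ≠ 0)]
  · exact lt_case x y h

open MeasureTheory in
lemma scalar_small (V : Type) [Fintype V] (G : SimpleGraph V) [DecidableRel G.Adj]
    (K p q : ℝ) (hq : 1 ≤ q) (hqp : q < p)
    (hpoin : ∀ f : V → ℝ, ∑ u, ∑ v, |f u - f v| ^ p ≤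
        K * ((∑ u, ∑ v, if G.Adj u v then |f u - f v| ^ p else 0) / 2)) (f : V → ℝ) :
    ∑ u, ∑ v, |f u - f v| ^ q ≤
        K * ((∑ u, ∑ v, if G.Adj u v then |f u - f v| ^ q else 0) / 2) := by
  obtain ⟨ψ, C, hC, h⟩ := kernel_exists p q hq hqp
  have hite : ∀ u v, Integrable fun t =>
      if G.Adj u v then |ψ (f u - t) - ψ (f v - t)| ^ p else 0 := by
    intro u v
    by_cases hA : G.Adj u v
    · simpa [hA] using (h (f u) (f v)).1
    · simp [hA]
  have hL : ∫ t, ∑ u, ∑ v, |ψ (f u - t) - ψ (f v - t)| ^ p = C * ∑ u, ∑ v, |f u - f v| ^ q := by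
    rw [integral_finsetSum _ fun u _ => integrable_finsetSum _ fun v _ => (h (f u) (f v)).1,
      Finset.mul_sum]
    refine Finset.sum_congr rfl fun u _ => ?_
    rw [integral_finsetSum _ fun v _ => (h (f u) (f v)).1, Finset.mul_sum]
    exact Finset.sum_congr rfl fun v _ => (h (f u) (f v)).2
  have hR : ∫ t, (∑ u, ∑ v, if G.Adj u v then |ψ (f u - t) - ψ (f v - t)| ^ p else 0) =
      C * ∑ u, ∑ v, if G.Adj u v then |f u - f v| ^ q else 0 := by
    rw [integral_finsetSum _ fun u _ => integrable_finsetSum _ fun v _ => hite u v,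
      Finset.mul_sum]
    refine Finset.sum_congr rfl fun u _ => ?_
    rw [integral_finsetSum _ fun v _ => hite u v, Finset.mul_sum]
    refine Finset.sum_congr rfl fun v _ => ?_
    by_cases hA : G.Adj u v
    · simpa [hA] using (h (f u) (f v)).2
    · simp [hA]
  have hmono := integral_mono
    (integrable_finsetSum _ fun u _ => integrable_finsetSum _ fun v _ => (h (f u) (f v)).1)
    (((integrable_finsetSum Finset.univ fun u _ => integrable_finsetSum Finset.univ
      fun v _ => hite u v).div_const 2).const_mul K)
    (fun t => hpoin fun u => ψ (f u - t))
  rw [hL, integral_const_mul, integral_div, hR] at hmono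
  refine le_of_mul_le_mul_left (hmono.trans_eq ?_) hC
  ring



/-- Extrapolation lemma for Poincaré inequalities: if a graph with maximal degree at
most `Δ` satisfies the scalar `p`-Poincaré inequality with constant `(Ap)^p`, then
(i) for `1 ≤ q ≤ p` the `ℓ_q`-valued `q`-Poincaré inequality holds with the same
constant, and (ii) for `q > p` it holds with constant `(4Aq)^q`. (Edge sums count
each edge once, i.e. are half the sums over ordered adjacent pairs.) -/
theorem poincare_extrapolation
    (V : Type) [Fintype V] [DecidableEq V] (G : SimpleGraph V) [DecidableRel G.Adj]
    (Δ : ℕ) (hΔ : 1 ≤ Δ) (hdeg : ∀ v : V, G.degree v ≤ Δ)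
    (p A : ℝ) (hp : 1 ≤ p) (hA : 0 < A)
    (hpoin : ∀ f : V → ℝ,
      ∑ u, ∑ v, |f u - f v| ^ p ≤
        (A * p) ^ p * ((Fintype.card V : ℝ) / Δ) *
          ((∑ u, ∑ v, if G.Adj u v then |f u - f v| ^ p else 0) / 2)) :
    (∀ q : ℝ, 1 ≤ q → q ≤ p →
      ∀ f : V → lp (fun _ : ℕ => ℝ) (ENNReal.ofReal q),
        ∑ u, ∑ v, ‖f u - f v‖ ^ q ≤
          (A * p) ^ p * ((Fintype.card V : ℝ) / Δ) *
            ((∑ u, ∑ v, if G.Adj u v then ‖f u - f v‖ ^ q else 0) / 2)) ∧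
    (∀ q : ℝ, p < q →
      ∀ f : V → lp (fun _ : ℕ => ℝ) (ENNReal.ofReal q),
        ∑ u, ∑ v, ‖f u - f v‖ ^ q ≤
          (4 * A * q) ^ q * ((Fintype.card V : ℝ) / Δ) *
            ((∑ u, ∑ v, if G.Adj u v then ‖f u - f v‖ ^ q else 0) / 2)) := by
  refine ⟨fun q hq hqp f => ?_, fun q hpq f => ?_⟩
  · refine lift_lq V G _ q hq (fun f => ?_) f
    rcases hqp.eq_or_lt with rfl | hlt
    · exact hpoin f
    · exact scalar_small V G _ p q hq hlt hpoin f
  · exact lift_lq V G _ q (hp.trans hpq.le)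
      (fun f => scalar_large V G Δ hΔ hdeg p A hp hA hpoin q hpq f) f
end
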